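/- Let f ∈ ℚ[X₁,…,Xₙ], let e ≥ 0 be an integer, and let 𝒯 be any subset of the set of monomials of total degree ≤ e. Let C_{f,𝒯} ⊆ ℝⁿ be the convex hull of the set of multi-indices {β + γ₁ + γ₂ : X^β ∈ supp(f), X^{γ₁}, X^{γ₂} ∈ 𝒯} and let 𝒢_{f,𝒯} = {X^α : 2α ∈ C_{f,𝒯}}. Then the following are equivalent: (1) f ∉ RSOS(𝒯); (2) there exists a rational sequence ŷ ∈ ℚ^m, where m is the number of elements of {X^{α+β} : X^α, X^β ∈ 𝒢_{f,𝒯}}, whose associated linear form L_ŷ satisfies: for every nonzero polynomial v with supp(v) ⊆ 𝒯 one has L_ŷ(f·v²) < 0, and for every polynomial u with supp(u) ⊆ 𝒢_{f,𝒯} one has L_ŷ(u²) ≥ 0. -/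

import Mathlib

open MvPolynomial

/-- Exponent multi-indices in `n` variables of total degree at most `d`
(the exponents of the monomials of total degree `≤ d`). -/
abbrev Idx (n d : ℕ) : Type := {α : Fin n →₀ ℕ // α.degree ≤ d}

noncomputable instance (n d : ℕ) : Fintype (Idx n d) :=
  Set.Finite.fintype (s := {α : Fin n →₀ ℕ | α.degree ≤ d}) <| by
    apply Set.Finite.subset
      (Set.finite_Iic (Finsupp.equivFunOnFinite.symm fun _ : Fin n => d))
    intro α hα
    simp only [Set.mem_Iic, Finsupp.le_def]
    intro i
    exact le_trans (Finsupp.le_degree i α) hα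

/-- `f ∈ RSOS(𝒯)` : there are polynomials `u₁,…,u_l, v₁,…,v_{l'}` with
`supp(vⱼ) ⊆ 𝒯` for all `j` and `Σⱼ vⱼ² ≠ 0` such that `f · Σⱼ vⱼ² = Σᵢ uᵢ²`. -/
def RSOS (n : ℕ) (𝒯 : Finset (Fin n →₀ ℕ)) (f : MvPolynomial (Fin n) ℝ) : Prop :=
  ∃ (l l' : ℕ) (u : Fin l → MvPolynomial (Fin n) ℝ)
    (v : Fin l' → MvPolynomial (Fin n) ℝ),
    (∀ j, (v j).support ⊆ 𝒯) ∧ (∑ j, v j ^ 2) ≠ 0 ∧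
      f * (∑ j, v j ^ 2) = ∑ i, u i ^ 2

/-- `f/g ∈ RSOS(𝒯)` for a rational function `f/g` : there are polynomials
`u₁,…,u_l, v₁,…,v_{l'}` with `supp(vⱼ) ⊆ 𝒯` for all `j` and `Σⱼ vⱼ² ≠ 0`
such that `f · Σⱼ vⱼ² = g · Σᵢ uᵢ²`. -/
def RSOSfrac (n : ℕ) (𝒯 : Finset (Fin n →₀ ℕ)) (f g : MvPolynomial (Fin n) ℝ) : Prop :=
  ∃ (l l' : ℕ) (u : Fin l → MvPolynomial (Fin n) ℝ)
    (v : Fin l' → MvPolynomial (Fin n) ℝ),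
    (∀ j, (v j).support ⊆ 𝒯) ∧ (∑ j, v j ^ 2) ≠ 0 ∧
      f * (∑ j, v j ^ 2) = g * ∑ i, u i ^ 2

/-- The moment matrix of order `t` of a sequence `y`, with rows and columns
indexed by multi-indices of degree `≤ t` and `(α,β)` entry `y_{α+β}`. -/
noncomputable def momentMatrix (n t : ℕ) (y : (Fin n →₀ ℕ) → ℝ) :
    Matrix (Idx n t) (Idx n t) ℝ :=
  fun α β => y (α.1 + β.1)

/-- The localizing moment matrix `M_t(qy)` of order `t`, with `(α,β)` entry
`Σ_γ q_γ y_{γ+α+β}`. -/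
noncomputable def locMomentMatrix (n t : ℕ) (q : MvPolynomial (Fin n) ℝ)
    (y : (Fin n →₀ ℕ) → ℝ) : Matrix (Idx n t) (Idx n t) ℝ :=
  fun α β => ∑ γ ∈ q.support, q.coeff γ * y (γ + α.1 + β.1)

/-- The localizing moment matrix `M(qy)` with rows and columns indexed by the
exponents of the monomials in `𝒯`, with `(α,β)` entry `Σ_γ q_γ y_{γ+α+β}`. -/
noncomputable def locMomentMatrixOn (n : ℕ) (𝒯 : Finset (Fin n →₀ ℕ))
    (q : MvPolynomial (Fin n) ℝ) (y : (Fin n →₀ ℕ) → ℝ) : Matrix 𝒯 𝒯 ℝ :=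
  fun α β => ∑ γ ∈ q.support, q.coeff γ * y (γ + α.1 + β.1)

/-- The linear form `L_y(p) = Σ_α y_α p_α` associated to a sequence `y`. -/
noncomputable def LForm (n : ℕ) (y : (Fin n →₀ ℕ) → ℝ)
    (p : MvPolynomial (Fin n) ℝ) : ℝ :=
  ∑ α ∈ p.support, y α * p.coeff α

/-- `p` is a sum of squares of polynomials. -/
def IsSOS (n : ℕ) (p : MvPolynomial (Fin n) ℝ) : Prop :=
  ∃ (l : ℕ) (u : Fin l → MvPolynomial (Fin n) ℝ), p = ∑ i, u i ^ 2

/-- The convex hull `C_{f,𝒯} ⊆ ℝⁿ` of the multi-indices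
`{β + γ₁ + γ₂ : X^β ∈ supp(f), X^{γ₁}, X^{γ₂} ∈ 𝒯}`. -/
noncomputable def hullFT (n : ℕ) (f : MvPolynomial (Fin n) ℚ)
    (𝒯 : Finset (Fin n →₀ ℕ)) : Set (Fin n → ℝ) :=
  convexHull ℝ
    {x | ∃ β ∈ f.support, ∃ γ₁ ∈ 𝒯, ∃ γ₂ ∈ 𝒯,
      x = fun i => (((β + γ₁ + γ₂ : Fin n →₀ ℕ)) i : ℝ)}

/-- The sparse monomial (exponent) set `𝒢_{f,𝒯} = {α : 2α ∈ C_{f,𝒯}}`. -/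
noncomputable def sparseG (n : ℕ) (f : MvPolynomial (Fin n) ℚ)
    (𝒯 : Finset (Fin n →₀ ℕ)) : Set (Fin n →₀ ℕ) :=
  {α | (fun i => (((α + α : Fin n →₀ ℕ)) i : ℝ)) ∈ hullFT n f 𝒯}

open scoped Pointwise

/-- In a finite-dimensional real space, the convex hull of a compact set is compact. -/
theorem IsCompact.convexHull_of_finiteDimensional {E : Type*} [NormedAddCommGroup E]
    [NormedSpace ℝ E] [FiniteDimensional ℝ E] {K : Set E} (hK : IsCompact K) :
    IsCompact (convexHull ℝ K) := by
  have key : convexHull ℝ K = ⋃ k ∈ Set.Iic (Module.finrank ℝ E + 1),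
      (fun p : (Fin k → ℝ) × (Fin k → E) => ∑ i, p.1 i • p.2 i) ''
        (stdSimplex ℝ (Fin k) ×ˢ Set.univ.pi fun _ => K) := by
    ext x
    simp only [Set.mem_iUnion, Set.mem_image, Set.mem_prod, Set.mem_univ_pi, Prod.exists]
    constructor
    · intro hx
      obtain ⟨ι, _, z, w, hz, hind, hw, hsum, rfl⟩ := eq_pos_convex_span_of_mem_convexHull hx
      have e := (Fintype.equivFin ι).symm
      refine ⟨Fintype.card ι, hind.card_le_finrank_succ.trans
        (Nat.succ_le_succ (Submodule.finrank_le _)), w ∘ e, z ∘ e,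
        ⟨⟨fun i => (hw _).le, ?_⟩, fun i => hz ⟨e i, rfl⟩⟩, ?_⟩
      · rw [← hsum]; exact e.sum_comp w
      · exact e.sum_comp fun i => w i • z i
    · rintro ⟨k, -, w, z, ⟨hw, hz⟩, rfl⟩
      exact (convex_convexHull ℝ K).sum_mem (fun i _ => hw.1 i) hw.2
        fun i _ => subset_convexHull ℝ K (hz i)
  rw [key]
  refine (Set.finite_Iic _).isCompact_biUnion fun k _ => ?_
  exact ((isCompact_stdSimplex ℝ (Fin k)).prod (isCompact_univ_pi fun _ => hK)).image (by fun_prop)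

/-- A compact set of vectors whose convex hull avoids the origin lies in an open half-space
with rational normal vector. -/
theorem exists_rat_forall_sum_mul_pos {ι : Type*} [Fintype ι] {K : Set (ι → ℝ)}
    (hK : IsCompact K) (h0 : (0 : ι → ℝ) ∉ convexHull ℝ K) :
    ∃ y : ι → ℚ, ∀ a ∈ K, 0 < ∑ i, (y i : ℝ) * a i := by
  classical
  obtain ⟨L, c, hc, hL⟩ := geometric_hahn_banach_point_closed (convex_convexHull ℝ K)
    hK.convexHull_of_finiteDimensional.isClosed h0
  have hLsum : ∀ a, L a = ∑ i, L (Pi.single i 1) * a i := by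
    intro a
    conv_lhs => rw [← Finset.univ_sum_single a, map_sum]
    refine Finset.sum_congr rfl fun i _ => ?_
    have : Pi.single i (a i) = a i • (Pi.single i 1 : ι → ℝ) := by
      rw [← Pi.single_smul, smul_eq_mul, mul_one]
    rw [this, map_smul, smul_eq_mul, mul_comm]
  have hev : ∀ᶠ y : ι → ℝ in nhds (fun i => L (Pi.single i 1)), ∀ a ∈ K, 0 < ∑ i, y i * a i := by
    refine hK.eventually_forall_of_forall_eventually fun a ha => ?_
    have hcont : Continuous fun p : (ι → ℝ) × (ι → ℝ) => ∑ i, p.1 i * p.2 i := by fun_prop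
    refine hcont.continuousAt.eventually (lt_mem_nhds ?_)
    have := hL a (subset_convexHull ℝ K ha)
    rw [map_zero] at hc
    simp only [← hLsum]
    linarith
  have hd : DenseRange (Pi.map fun (_ : ι) (q : ℚ) => (q : ℝ)) :=
    DenseRange.piMap fun _ => Rat.denseRange_cast
  obtain ⟨U, hU, hUo, hUm⟩ := eventually_nhds_iff.1 hev
  obtain ⟨q, hq⟩ := hd.exists_mem_open hUo ⟨_, hUm⟩
  exact ⟨q, hU _ hq⟩

/-- The sums of squares of real polynomials with support in `T`. -/
def sumSqOn {n : ℕ} (T : Set (Fin n →₀ ℕ)) : Set (MvPolynomial (Fin n) ℝ) :=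
  {p | ∃ (l : ℕ) (u : Fin l → MvPolynomial (Fin n) ℝ),
    (∀ i, ↑(u i).support ⊆ T) ∧ p = ∑ i, u i ^ 2}

section sumSqOn

variable {n : ℕ} {T : Set (Fin n →₀ ℕ)} {p q : MvPolynomial (Fin n) ℝ}

theorem zero_mem_sumSqOn : (0 : MvPolynomial (Fin n) ℝ) ∈ sumSqOn T :=
  ⟨0, Fin.elim0, fun i => i.elim0, by simp⟩

theorem sq_mem_sumSqOn (hp : ↑p.support ⊆ T) : p ^ 2 ∈ sumSqOn T :=
  ⟨1, fun _ => p, fun _ => hp, by simp⟩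

theorem add_mem_sumSqOn (hp : p ∈ sumSqOn T) (hq : q ∈ sumSqOn T) : p + q ∈ sumSqOn T := by
  obtain ⟨l, u, hu, rfl⟩ := hp
  obtain ⟨m, v, hv, rfl⟩ := hq
  refine ⟨l + m, Fin.append u v, fun i => ?_, by simp [Fin.sum_univ_add]⟩
  refine Fin.addCases (fun i => ?_) (fun i => ?_) i
  · simpa using hu i
  · simpa using hv i

theorem smul_mem_sumSqOn {c : ℝ} (hc : 0 ≤ c) (hp : p ∈ sumSqOn T) : c • p ∈ sumSqOn T := by
  obtain ⟨l, u, hu, rfl⟩ := hp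
  refine ⟨l, fun i => √c • u i, fun i => ?_, ?_⟩
  · exact (Finset.coe_subset.2 (MvPolynomial.support_smul)).trans (hu i)
  · simp_rw [smul_pow, Real.sq_sqrt hc, Finset.smul_sum]

theorem eval_nonneg_of_mem_sumSqOn (hp : p ∈ sumSqOn T) (x : Fin n → ℝ) : 0 ≤ eval x p := by
  obtain ⟨l, u, -, rfl⟩ := hp
  rw [map_sum]
  exact Finset.sum_nonneg fun i _ => by rw [map_pow]; positivity

theorem eq_zero_of_add_eq_zero_of_mem_sumSqOn (hp : p ∈ sumSqOn T) (hq : q ∈ sumSqOn T)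
    (h : p + q = 0) : p = 0 := by
  refine MvPolynomial.funext fun x => ?_
  have h1 := congrArg (eval x) h
  have h2 := eval_nonneg_of_mem_sumSqOn hp x
  have h3 := eval_nonneg_of_mem_sumSqOn hq x
  simp only [map_add, map_zero] at h1 ⊢
  linarith

end sumSqOn

section LForm

variable {n : ℕ} (y : (Fin n →₀ ℕ) → ℝ)

theorem LForm_eq_sum_of_support_subset {p : MvPolynomial (Fin n) ℝ} {M : Finset (Fin n →₀ ℕ)}
    (h : p.support ⊆ M) : LForm n y p = ∑ α ∈ M, y α * p.coeff α :=
  Finset.sum_subset h fun α _ hα => by rw [notMem_support_iff.1 hα, mul_zero]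

theorem LForm_zero : LForm n y 0 = 0 := by simp [LForm]

theorem LForm_add (p q : MvPolynomial (Fin n) ℝ) :
    LForm n y (p + q) = LForm n y p + LForm n y q := by
  classical
  rw [LForm_eq_sum_of_support_subset y (support_add (p := p) (q := q)),
    LForm_eq_sum_of_support_subset y (Finset.subset_union_left (s₁ := p.support) (s₂ := q.support)),
    LForm_eq_sum_of_support_subset y (Finset.subset_union_right (s₁ := p.support) (s₂ := q.support)),
    ← Finset.sum_add_distrib]
  simp only [coeff_add, mul_add]

theorem LForm_sum {ι : Type*} (s : Finset ι) (p : ι → MvPolynomial (Fin n) ℝ) :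
    LForm n y (∑ i ∈ s, p i) = ∑ i ∈ s, LForm n y (p i) :=
  map_sum (AddMonoidHom.mk' (LForm n y) (LForm_add y)) p s

end LForm

/-- A multi-index, viewed as a real vector and doubled. -/
noncomputable def doubledExponent {n : ℕ} (α : Fin n →₀ ℕ) : Fin n → ℝ :=
  fun i => (((α + α : Fin n →₀ ℕ)) i : ℝ)

theorem doubledExponent_injective {n : ℕ} :
    Function.Injective (doubledExponent : (Fin n →₀ ℕ) → Fin n → ℝ) := by
  intro α β h
  ext i
  have := congrFun h i
  simp only [doubledExponent, Finsupp.add_apply, Nat.cast_inj] at this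
  omega

/-- If `2α` is an extreme point of the doubled supports of the `u i` and `α` occurs in some `u i`,
then `2α` occurs in `∑ i, u i ^ 2`. -/
theorem coeff_sum_sq_ne_zero_of_extreme {n l : ℕ} (u : Fin l → MvPolynomial (Fin n) ℝ)
    {α : Fin n →₀ ℕ} (hα : ∃ i, α ∈ (u i).support)
    (hext : doubledExponent α ∈
      (convexHull ℝ (doubledExponent '' {β | ∃ i, β ∈ (u i).support})).extremePoints ℝ) :
    (∑ i, u i ^ 2).coeff (α + α) ≠ 0 := by
  classical
  have hcoeff : ∀ i, (u i ^ 2).coeff (α + α) = (u i).coeff α ^ 2 := by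
    intro i
    rw [sq, coeff_mul, sq]
    refine Finset.sum_eq_single (α, α) ?_ (fun h => by simp at h)
    rintro ⟨β, γ⟩ hβγ hne
    rw [Finset.HasAntidiagonal.mem_antidiagonal] at hβγ
    by_contra hprod
    have hβ : β ∈ (u i).support := mem_support_iff.2 (left_ne_zero_of_mul hprod)
    have hγ : γ ∈ (u i).support := mem_support_iff.2 (right_ne_zero_of_mul hprod)
    obtain ⟨h1, h2⟩ := (mem_extremePoints.1 hext).2 _
      (subset_convexHull ℝ _ ⟨β, ⟨i, hβ⟩, rfl⟩) _ (subset_convexHull ℝ _ ⟨γ, ⟨i, hγ⟩, rfl⟩)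
      ⟨1 / 2, 1 / 2, by norm_num, by norm_num, by norm_num, by
        funext j
        have hj : ((β j : ℝ) + γ j) = α j + α j := by
          exact_mod_cast DFunLike.congr_fun hβγ j
        simp only [doubledExponent, Pi.add_apply, Pi.smul_apply, smul_eq_mul, Finsupp.add_apply,
          Nat.cast_add]
        linarith⟩
    exact hne (Prod.ext (doubledExponent_injective h1) (doubledExponent_injective h2))
  rw [coeff_sum]
  simp only [hcoeff]
  obtain ⟨i, hi⟩ := hα
  refine ne_of_gt (Finset.sum_pos' (fun i _ => sq_nonneg _) ⟨i, Finset.mem_univ i, ?_⟩)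
  have := mem_support_iff.1 hi
  positivity

/-- If a sum of squares has its support in a closed convex set `C`,
then every exponent `α` of every summand satisfies `2α ∈ C`. -/
theorem doubledExponent_mem_of_support_sum_sq {n l : ℕ} (u : Fin l → MvPolynomial (Fin n) ℝ)
    {C : Set (Fin n → ℝ)} (hC : Convex ℝ C) (hCc : IsClosed C)
    (h : ∀ α ∈ (∑ i, u i ^ 2).support, (fun j => ((α j : ℕ) : ℝ)) ∈ C)
    (i : Fin l) {α : Fin n →₀ ℕ} (hα : α ∈ (u i).support) : doubledExponent α ∈ C := by
  set D : Set (Fin n → ℝ) := doubledExponent '' {β | ∃ i, β ∈ (u i).support} with hD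
  have hfin : D.Finite := by
    refine Set.Finite.image _ ((Set.finite_iUnion fun i => (u i).support.finite_toSet).subset ?_)
    rintro β ⟨i, hi⟩
    exact Set.mem_iUnion.2 ⟨i, hi⟩
  have hsub : (convexHull ℝ D).extremePoints ℝ ⊆ C := by
    intro x hx
    obtain ⟨β, hβ, rfl⟩ := extremePoints_convexHull_subset hx
    exact h _ (mem_support_iff.2 (coeff_sum_sq_ne_zero_of_extreme u hβ hx))
  have hhull : convexHull ℝ D ⊆ C := by
    rw [← closure_convexHull_extremePoints (hfin.isCompact_convexHull ℝ) (convex_convexHull ℝ D)]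
    exact closure_minimal (convexHull_min hsub hC) hCc
  exact hhull (subset_convexHull ℝ D ⟨α, ⟨i, hα⟩, rfl⟩)

theorem finite_generators_hullFT (n : ℕ) (f : MvPolynomial (Fin n) ℚ)
    (𝒯 : Finset (Fin n →₀ ℕ)) :
    {x : Fin n → ℝ | ∃ β ∈ f.support, ∃ γ₁ ∈ 𝒯, ∃ γ₂ ∈ 𝒯,
      x = fun i => (((β + γ₁ + γ₂ : Fin n →₀ ℕ)) i : ℝ)}.Finite := by
  classical
  refine ((f.support + 𝒯 + 𝒯).finite_toSet.image
    fun (α : Fin n →₀ ℕ) i => ((α i : ℕ) : ℝ)).subset ?_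
  rintro x ⟨β, hβ, γ₁, h₁, γ₂, h₂, rfl⟩
  exact ⟨_, Finset.add_mem_add (Finset.add_mem_add hβ h₁) h₂, rfl⟩

theorem isCompact_hullFT (n : ℕ) (f : MvPolynomial (Fin n) ℚ) (𝒯 : Finset (Fin n →₀ ℕ)) :
    IsCompact (hullFT n f 𝒯) :=
  (finite_generators_hullFT n f 𝒯).isCompact_convexHull ℝ

theorem finite_sparseG (n : ℕ) (f : MvPolynomial (Fin n) ℚ) (𝒯 : Finset (Fin n →₀ ℕ)) :
    (sparseG n f 𝒯).Finite := by
  obtain ⟨B, hB⟩ := (isCompact_hullFT n f 𝒯).isBounded.exists_norm_le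
  refine (Set.finite_Iic (Finsupp.equivFunOnFinite.symm fun _ : Fin n => ⌈B⌉₊)).subset ?_
  intro α hα i
  have h1 := (norm_le_pi_norm _ i).trans (hB _ hα)
  have h2 : (α i : ℝ) ≤ ⌈B⌉₊ := by
    refine le_trans ?_ (h1.trans (Nat.le_ceil B))
    simp only [Finsupp.add_apply, Nat.cast_add]
    exact le_trans (by linarith [Nat.cast_nonneg (α := ℝ) (α i)]) (le_abs_self _)
  simpa using h2

theorem support_map_mul_sq_subset {n : ℕ} (f : MvPolynomial (Fin n) ℚ)
    {𝒯 : Finset (Fin n →₀ ℕ)} {v : MvPolynomial (Fin n) ℝ} (hv : v.support ⊆ 𝒯) :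
    (f.map (algebraMap ℚ ℝ) * v ^ 2).support ⊆ f.support + (𝒯 + 𝒯) := by
  classical
  refine (support_mul _ _).trans (Finset.add_subset_add (support_map_subset _ _) ?_)
  rw [sq]
  exact (support_mul _ _).trans (Finset.add_subset_add hv hv)

/-- The polynomial with prescribed coefficients on a finite set of exponents. -/
noncomputable def polyOfCoeffs {n : ℕ} {T : Finset (Fin n →₀ ℕ)} (c : T → ℝ) :
    MvPolynomial (Fin n) ℝ :=
  ∑ t : T, monomial t.1 (c t)

section polyOfCoeffs

variable {n : ℕ} {T : Finset (Fin n →₀ ℕ)}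

theorem support_polyOfCoeffs_subset (c : T → ℝ) : (polyOfCoeffs c).support ⊆ T := by
  classical
  refine support_sum.trans (Finset.biUnion_subset.2 fun t _ => ?_)
  exact support_monomial_subset.trans (Finset.singleton_subset_iff.2 t.2)

theorem coeff_polyOfCoeffs (c : T → ℝ) (t : T) : (polyOfCoeffs c).coeff t.1 = c t := by
  classical
  simp [polyOfCoeffs, coeff_sum, coeff_monomial]

theorem polyOfCoeffs_coeff {p : MvPolynomial (Fin n) ℝ} (hp : p.support ⊆ T) :
    polyOfCoeffs (fun t : T => p.coeff t.1) = p := by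
  rw [polyOfCoeffs, Finset.sum_coe_sort T fun t => monomial t (p.coeff t)]
  conv_rhs => rw [p.as_sum]
  exact (Finset.sum_subset hp fun t _ ht => by rw [notMem_support_iff.1 ht, map_zero]).symm

theorem polyOfCoeffs_smul (a : ℝ) (c : T → ℝ) : polyOfCoeffs (a • c) = a • polyOfCoeffs c := by
  simp [polyOfCoeffs, Finset.smul_sum, smul_monomial]

theorem polyOfCoeffs_ne_zero {c : T → ℝ} (hc : c ≠ 0) : polyOfCoeffs c ≠ 0 := by
  contrapose! hc
  funext t
  rw [← coeff_polyOfCoeffs c t, hc, coeff_zero, Pi.zero_apply]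

theorem continuous_coeff_mul_polyOfCoeffs_sq (g : MvPolynomial (Fin n) ℝ) (m : Fin n →₀ ℕ) :
    Continuous fun c : T → ℝ => (g * polyOfCoeffs c ^ 2).coeff m := by
  have h : ∀ c : T → ℝ, (g * polyOfCoeffs c ^ 2).coeff m =
      ∑ s : T, ∑ t : T, c s * c t * (g * (monomial s.1 1 * monomial t.1 1)).coeff m := by
    intro c
    rw [sq, polyOfCoeffs, Finset.sum_mul_sum, Finset.mul_sum, coeff_sum]
    refine Finset.sum_congr rfl fun s _ => ?_
    rw [Finset.mul_sum, coeff_sum]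
    refine Finset.sum_congr rfl fun t _ => ?_
    rw [monomial_mul, monomial_mul, one_mul, ← coeff_C_mul, mul_left_comm, C_mul_monomial, mul_one]
  simp only [h]
  fun_prop

/-- Every nonzero polynomial supported in `T` is a nonzero multiple of one whose coefficient
vector has norm one. -/
theorem exists_eq_smul_polyOfCoeffs_sphere {p : MvPolynomial (Fin n) ℝ} (hp : p.support ⊆ T)
    (h0 : p ≠ 0) : ∃ a : ℝ, a ≠ 0 ∧ ∃ c ∈ Metric.sphere (0 : T → ℝ) 1, p = a • polyOfCoeffs c := by
  set d : T → ℝ := fun t => p.coeff t.1 with hd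
  have hpd : polyOfCoeffs d = p := polyOfCoeffs_coeff hp
  have hd0 : d ≠ 0 := by
    intro h
    apply h0
    rw [← hpd, h, polyOfCoeffs]
    simp
  have hn : ‖d‖ ≠ 0 := norm_ne_zero_iff.2 hd0
  refine ⟨‖d‖, hn, ‖d‖⁻¹ • d, ?_, ?_⟩
  · rw [mem_sphere_zero_iff_norm, norm_smul, norm_inv, norm_norm, inv_mul_cancel₀ hn]
  · rw [← polyOfCoeffs_smul, smul_inv_smul₀ hn, hpd]

end polyOfCoeffs

/-- Separation of two cones: if no nonzero sum of squares supported in `T` becomes, after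
multiplication by `g`, a sum of squares supported in `G`, then a rational linear form is negative
on the `g v²` and nonnegative on the `u²`. -/
theorem exists_rat_LForm_separating {n : ℕ} (g : MvPolynomial (Fin n) ℝ)
    (T G : Finset (Fin n →₀ ℕ))
    (h : ∀ s ∈ sumSqOn (T : Set (Fin n →₀ ℕ)), s ≠ 0 → g * s ∉ sumSqOn (G : Set (Fin n →₀ ℕ))) :
    ∃ y : (Fin n →₀ ℕ) → ℚ,
      (∀ v : MvPolynomial (Fin n) ℝ, v ≠ 0 → v.support ⊆ T →
        LForm n (fun α => (y α : ℝ)) (g * v ^ 2) < 0) ∧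
      (∀ u : MvPolynomial (Fin n) ℝ, u.support ⊆ G →
        0 ≤ LForm n (fun α => (y α : ℝ)) (u ^ 2)) := by
  classical
  set M : Finset (Fin n →₀ ℕ) := (g.support + (T + T)) ∪ (G + G) with hM
  have hMv : ∀ v : MvPolynomial (Fin n) ℝ, v.support ⊆ T → (g * v ^ 2).support ⊆ M := by
    intro v hv
    refine ((support_mul _ _).trans (Finset.add_subset_add_left ?_)).trans
      Finset.subset_union_left
    rw [sq]
    exact (support_mul _ _).trans (Finset.add_subset_add hv hv)
  have hMu : ∀ u : MvPolynomial (Fin n) ℝ, u.support ⊆ G → (u ^ 2).support ⊆ M := by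
    intro u hu
    rw [sq]
    exact ((support_mul _ _).trans (Finset.add_subset_add hu hu)).trans Finset.subset_union_right
  let φ : MvPolynomial (Fin n) ℝ →ₗ[ℝ] (M → ℝ) := LinearMap.pi fun m => lcoeff ℝ m.1
  have hφ : ∀ p m, φ p m = p.coeff m.1 := fun p m => rfl
  set K₁ : Set (M → ℝ) := (fun c : T → ℝ => φ (-g * polyOfCoeffs c ^ 2)) '' Metric.sphere 0 1
  set K₂ : Set (M → ℝ) := (fun c : G → ℝ => φ (1 * polyOfCoeffs c ^ 2)) '' Metric.sphere 0 1
  have hK : IsCompact (K₁ ∪ K₂) := by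
    refine ((isCompact_sphere _ _).image ?_).union ((isCompact_sphere _ _).image ?_) <;>
    exact continuous_pi fun m => continuous_coeff_mul_polyOfCoeffs_sq _ _
  have hne : ∀ {S : Finset (Fin n →₀ ℕ)} {c : S → ℝ}, c ∈ Metric.sphere (0 : S → ℝ) 1 →
      polyOfCoeffs c ^ 2 ≠ 0 := by
    intro S c hc
    refine pow_ne_zero 2 (polyOfCoeffs_ne_zero ?_)
    rintro rfl
    simp at hc
  set D : Set (M → ℝ) := {x | ∃ s ∈ sumSqOn (T : Set (Fin n →₀ ℕ)),
    ∃ t ∈ sumSqOn (G : Set (Fin n →₀ ℕ)), (s ≠ 0 ∨ t ≠ 0) ∧ x = φ (t - g * s)} with hD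
  have hDconv : Convex ℝ D := by
    rw [convex_iff_forall_pos]
    rintro _ ⟨s₁, hs₁, t₁, ht₁, h₁, rfl⟩ _ ⟨s₂, hs₂, t₂, ht₂, h₂, rfl⟩ a b ha hb -
    have has := smul_mem_sumSqOn ha.le hs₁
    have hat := smul_mem_sumSqOn ha.le ht₁
    have hbs := smul_mem_sumSqOn hb.le hs₂
    have hbt := smul_mem_sumSqOn hb.le ht₂
    refine ⟨_, add_mem_sumSqOn has hbs, _, add_mem_sumSqOn hat hbt, ?_, ?_⟩
    · refine h₁.imp (fun h₁ hs => ?_) (fun h₁ ht => ?_)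
      · exact smul_ne_zero ha.ne' h₁ (eq_zero_of_add_eq_zero_of_mem_sumSqOn has hbs hs)
      · exact smul_ne_zero ha.ne' h₁ (eq_zero_of_add_eq_zero_of_mem_sumSqOn hat hbt ht)
    · rw [← map_smul, ← map_smul, ← map_add]
      congr 1
      simp only [smul_sub, mul_add, mul_smul_comm]
      ring
  have hKD : K₁ ∪ K₂ ⊆ D := by
    rintro _ (⟨c, hc, rfl⟩ | ⟨c, hc, rfl⟩)
    · exact ⟨_, sq_mem_sumSqOn (support_polyOfCoeffs_subset c), 0, zero_mem_sumSqOn,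
        Or.inl (hne hc), by simp⟩
    · exact ⟨0, zero_mem_sumSqOn, _, sq_mem_sumSqOn (support_polyOfCoeffs_subset c),
        Or.inr (hne hc), by simp⟩
  have h0D : (0 : M → ℝ) ∉ D := by
    rintro ⟨s, hs, t, ht, hst, h0⟩
    have hgs : (g * s).support ⊆ M := by
      obtain ⟨l, v, hv, rfl⟩ := hs
      rw [Finset.mul_sum]
      exact support_sum.trans (Finset.biUnion_subset.2 fun i _ => hMv _ (hv i))
    have hts : t.support ⊆ M := by
      obtain ⟨l, u, hu, rfl⟩ := ht
      exact support_sum.trans (Finset.biUnion_subset.2 fun i _ => hMu _ (hu i))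
    have heq : t = g * s := by
      ext m
      by_cases hm : m ∈ M
      · have := congrFun h0 ⟨m, hm⟩
        rw [hφ, coeff_sub, Pi.zero_apply] at this
        linarith
      · rw [notMem_support_iff.1 fun h => hm (hts h), notMem_support_iff.1 fun h => hm (hgs h)]
    by_cases hs0 : s = 0
    · subst hs0
      simp [heq] at hst
    · exact h s hs hs0 (heq ▸ ht)
  obtain ⟨y, hy⟩ := exists_rat_forall_sum_mul_pos hK fun h0 => h0D (convexHull_min hKD hDconv h0)
  refine ⟨fun α => if hα : α ∈ M then y ⟨α, hα⟩ else 0, ?_⟩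
  set z : (Fin n →₀ ℕ) → ℝ := fun α => ((if hα : α ∈ M then y ⟨α, hα⟩ else 0 : ℚ) : ℝ) with hz
  have hL : ∀ p : MvPolynomial (Fin n) ℝ, p.support ⊆ M →
      LForm n z p = ∑ m : M, (y m : ℝ) * φ p m := by
    intro p hp
    rw [LForm_eq_sum_of_support_subset _ hp, ← Finset.sum_coe_sort]
    refine Finset.sum_congr rfl fun m _ => ?_
    simp [hz, hφ]
  constructor
  · intro v hv0 hvT
    rw [hL _ (hMv v hvT)]
    obtain ⟨a, ha, c, hc, rfl⟩ := exists_eq_smul_polyOfCoeffs_sphere hvT hv0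
    have hpos := hy _ (Or.inl ⟨c, hc, rfl⟩)
    have ha2 : 0 < a ^ 2 := by positivity
    simp only [neg_mul, map_neg, Pi.neg_apply, mul_neg, Finset.sum_neg_distrib] at hpos
    simp only [smul_pow, mul_smul_comm, map_smul, Pi.smul_apply, smul_eq_mul, mul_left_comm _ (a ^ 2),
      ← Finset.mul_sum]
    exact mul_neg_of_pos_of_neg ha2 (by linarith)
  · intro u huG
    rw [hL _ (hMu u huG)]
    by_cases hu0 : u = 0
    · simp [hu0]
    obtain ⟨a, ha, c, hc, rfl⟩ := exists_eq_smul_polyOfCoeffs_sphere huG hu0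
    have hpos := hy _ (Or.inr ⟨c, hc, rfl⟩)
    simp only [one_mul] at hpos
    simp only [smul_pow, map_smul, Pi.smul_apply, smul_eq_mul, mul_left_comm _ (a ^ 2),
      ← Finset.mul_sum]
    positivity

/-- sparse version: for `f ∈ ℚ[X]`, `f ∉ RSOS(𝒯)` iff there exists a
rational sequence `ŷ` whose linear form satisfies `L_ŷ(f·v²) < 0` for every nonzero
`v` with `supp(v) ⊆ 𝒯`, and `L_ŷ(u²) ≥ 0` for every `u` with `supp(u) ⊆ 𝒢_{f,𝒯}`. -/
theorem statement7 (n e : ℕ) (f : MvPolynomial (Fin n) ℚ)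
    (𝒯 : Finset (Fin n →₀ ℕ)) (h𝒯 : ∀ α ∈ 𝒯, α.degree ≤ e) :
    ¬ RSOS n 𝒯 (f.map (algebraMap ℚ ℝ)) ↔
      ∃ yhat : (Fin n →₀ ℕ) → ℚ,
        (∀ v : MvPolynomial (Fin n) ℝ, v ≠ 0 → v.support ⊆ 𝒯 →
          LForm n (fun α => (yhat α : ℝ)) ((f.map (algebraMap ℚ ℝ)) * v ^ 2) < 0) ∧
        (∀ u : MvPolynomial (Fin n) ℝ, ↑u.support ⊆ sparseG n f 𝒯 →
          0 ≤ LForm n (fun α => (yhat α : ℝ)) (u ^ 2)) := by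
  classical
  set g : MvPolynomial (Fin n) ℝ := f.map (algebraMap ℚ ℝ) with hg
  constructor
  · intro hf
    have hfin := finite_sparseG n f 𝒯
    obtain ⟨y, hy₁, hy₂⟩ := exists_rat_LForm_separating g 𝒯 hfin.toFinset (by
      rintro s ⟨l', v, hv, rfl⟩ hs ⟨l, u, -, hu⟩
      exact hf ⟨l, l', u, v, hv, hs, hu⟩)
    refine ⟨y, hy₁, fun u hu => hy₂ u ?_⟩
    rwa [← Finset.coe_subset, hfin.coe_toFinset]
  · rintro ⟨y, hy₁, hy₂⟩ ⟨l, l', u, v, hv, hv0, heq⟩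
    have hsupp : ∀ i, ↑(u i).support ⊆ sparseG n f 𝒯 := by
      intro i α hα
      refine doubledExponent_mem_of_support_sum_sq u (convex_convexHull ℝ _)
        (isCompact_hullFT n f 𝒯).isClosed (fun β hβ => subset_convexHull ℝ _ ?_) i hα
      rw [← heq, Finset.mul_sum] at hβ
      obtain ⟨j, -, hj⟩ := Finset.mem_biUnion.1 (support_sum hβ)
      obtain ⟨b, hb, c, hc, rfl⟩ := Finset.mem_add.1 (support_map_mul_sq_subset f (hv j) hj)
      obtain ⟨γ₁, h₁, γ₂, h₂, rfl⟩ := Finset.mem_add.1 hc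
      exact ⟨b, hb, γ₁, h₁, γ₂, h₂, by rw [add_assoc]⟩
    have hL := congrArg (LForm n fun α => (y α : ℝ)) heq
    rw [Finset.mul_sum, LForm_sum, LForm_sum] at hL
    have hR : 0 ≤ ∑ i, LForm n (fun α => (y α : ℝ)) (u i ^ 2) :=
      Finset.sum_nonneg fun i _ => hy₂ _ (hsupp i)
    obtain ⟨j, -, hj⟩ := Finset.exists_ne_zero_of_sum_ne_zero hv0
    refine (hL ▸ hR).not_gt (Finset.sum_neg' (fun i _ => ?_)
      ⟨j, Finset.mem_univ j, hy₁ _ (fun h => hj (by simp [h])) (hv j)⟩)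
    by_cases hi : v i = 0
    · simp [hi, LForm_zero]
    · exact (hy₁ _ hi (hv i)).le
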